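/- arXiv:2411.03854 — 2 statements merged into one kernel-verified Lean document; each statement's English description precedes it below -/
import Mathlib

section
/- Let A ⊆ ℤ_M be nonempty and let h_A be the averaged autocorrelation function of A. Then for every divisor m of M with m > 1: ĥ_A vanishes identically on R_{M/m} if and only if 1̂_A vanishes identically on R_{M/m} (i.e., the mask polynomials of h_A and of 1_A have exactly the same cyclotomic divisors Φ_m). -/
/-!
For a unit `r`, the transform of `1_{rA}` at `ξ` is `1̂_A(rξ)`, and that of `1_{-rA}` is its complex
conjugate. By the convolution theorem, `ĥ_A(ξ)` is therefore a positive constant times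
`∑_r |1̂_A(rξ)|²`, the sum running over the units `r` (`fhat_hAfun`). All terms are nonnegative, so
`ĥ_A(ξ) = 0` forces the term `r = 1`, namely `|1̂_A(ξ)|²`, to vanish. Conversely, multiplication by a
unit preserves every step class, so if `1̂_A` vanishes on a step class then every term of the sum
vanishes for each `ξ` in that class.
-/

open Finset

noncomputable def fhat (M : ℕ) [NeZero M] (f : ZMod M → ℝ) (ξ : ZMod M) : ℂ :=
  ∑ z : ZMod M, (f z : ℂ) *
    Complex.exp (-2 * Real.pi * Complex.I * ((z.val : ℂ) * (ξ.val : ℂ)) / (M : ℂ))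

noncomputable def conv (M : ℕ) [NeZero M] (f g : ZMod M → ℝ) (x : ZMod M) : ℝ :=
  ∑ y : ZMod M, f y * g (x - y)

def IsStepFun (M : ℕ) [NeZero M] (f : ZMod M → ℝ) : Prop :=
  ∀ z w : ZMod M, Nat.gcd z.val M = Nat.gcd w.val M → f z = f w

/-- `Φ_d | F` : the Fourier transform of `f` vanishes on the step class `R_{M/d}`. -/
def cycDvd (M : ℕ) [NeZero M] (f : ZMod M → ℝ) (d : ℕ) : Prop :=
  ∀ ξ : ZMod M, Nat.gcd ξ.val M = M / d → fhat M f ξ = 0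

open scoped Classical in
noncomputable def SF (M : ℕ) [NeZero M] (f : ZMod M → ℝ) : Finset ℕ :=
  M.divisors.filter (fun s => IsPrimePow s ∧ cycDvd M f s)

noncomputable def satT1 (M : ℕ) [NeZero M] (f : ZMod M → ℝ) : Prop :=
  ∑ z : ZMod M, f z = ∏ s ∈ SF M f, (s.minFac : ℝ)

def satT2 (M : ℕ) [NeZero M] (f : ZMod M → ℝ) : Prop :=
  ∀ S : Finset ℕ, S.Nonempty → S ⊆ SF M f →
    (∀ s ∈ S, ∀ t ∈ S, s ≠ t → s.minFac ≠ t.minFac) →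
    cycDvd M f (∏ s ∈ S, s)

def IsTiling (M : ℕ) [NeZero M] (A B : Finset (ZMod M)) : Prop :=
  ∀ z : ZMod M, ∃! ab : ZMod M × ZMod M, ab.1 ∈ A ∧ ab.2 ∈ B ∧ ab.1 + ab.2 = z

/-- `H` is a union of step classes. -/
def IsStepSet (M : ℕ) [NeZero M] (H : Set (ZMod M)) : Prop :=
  ∀ z w : ZMod M, Nat.gcd z.val M = Nat.gcd w.val M → (z ∈ H ↔ w ∈ H)

def divStar (M : ℕ) [NeZero M] (A : Finset (ZMod M)) : Set (ZMod M) :=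
  {z | ∃ a ∈ A, ∃ a' ∈ A, Nat.gcd z.val M = Nat.gcd (a - a').val M}

noncomputable def cliqueNum (M : ℕ) [NeZero M] (H : Set (ZMod M)) : ℕ :=
  sSup {n | ∃ C : Finset (ZMod M), (∀ x ∈ C, ∀ y ∈ C, x - y ∈ H) ∧ C.card = n}

noncomputable def Dplus (M : ℕ) [NeZero M] (H : Set (ZMod M)) : ℝ :=
  sSup {t : ℝ | ∃ h : ZMod M → ℝ, IsStepFun M h ∧ h 0 = 1 ∧
    (∀ ξ, (fhat M h ξ).im = 0 ∧ 0 ≤ (fhat M h ξ).re) ∧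
    (∀ z ∈ H, 0 ≤ h z) ∧ (∀ z ∉ H, h z = 0) ∧ t = ∑ z : ZMod M, h z}

noncomputable def Dminus (M : ℕ) [NeZero M] (H : Set (ZMod M)) : ℝ :=
  sSup {t : ℝ | ∃ h : ZMod M → ℝ, IsStepFun M h ∧ h 0 = 1 ∧
    (∀ ξ, (fhat M h ξ).im = 0 ∧ 0 ≤ (fhat M h ξ).re) ∧
    (∀ z ∉ H, h z ≤ 0) ∧ t = ∑ z : ZMod M, h z}

noncomputable def Ddelta (M : ℕ) [NeZero M] (δ : ℝ) (H : Set (ZMod M)) : ℝ :=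
  sSup {t : ℝ | ∃ h : ZMod M → ℝ, IsStepFun M h ∧ h 0 = 1 ∧
    (∀ ξ, (fhat M h ξ).im = 0 ∧ 0 ≤ (fhat M h ξ).re) ∧
    (∀ z ∈ H, δ ≤ h z) ∧ (∀ z ∉ H, h z = 0) ∧ t = ∑ z : ZMod M, h z}

open scoped Classical in
noncomputable def SH (M : ℕ) [NeZero M] (H : Set (ZMod M)) : Finset ℕ :=
  M.divisors.filter (fun s => IsPrimePow s ∧ ∀ ξ : ZMod M, Nat.gcd ξ.val M = M / s → ξ ∈ H)

noncomputable def kH (M : ℕ) [NeZero M] (H : Set (ZMod M)) : ℕ :=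
  ∏ s ∈ SH M H, s.minFac

def cubVertex (M : ℕ) [NeZero M] {K : ℕ} (p : Fin K → ℕ) (c : ZMod M)
    (ρ : Fin K → ℕ) (S : Finset (Fin K)) : ZMod M :=
  c + ∑ i ∈ S, ((ρ i * (M / p i) : ℕ) : ZMod M)

noncomputable def cubEval (M : ℕ) [NeZero M] {K : ℕ} (p : Fin K → ℕ) (c : ZMod M)
    (ρ : Fin K → ℕ) (f : ZMod M → ℝ) : ℝ :=
  ∑ S : Finset (Fin K), (-1 : ℝ) ^ S.card * f (cubVertex M p c ρ S)

noncomputable def hAfun (M : ℕ) [NeZero M] (A : Finset (ZMod M)) (z : ZMod M) : ℝ :=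
  (1 / ((A.card : ℝ) * (Nat.totient M : ℝ))) *
    ∑ r ∈ Finset.univ.filter (fun r : ZMod M => Nat.gcd r.val M = 1),
      conv M (fun x => if x ∈ A.image (fun a => r * a) then (1 : ℝ) else 0)
             (fun x => if x ∈ A.image (fun a => -(r * a)) then (1 : ℝ) else 0) z

noncomputable def fN (M : ℕ) [NeZero M] (f : ZMod M → ℝ) (N : ℕ) (z : ZMod N) : ℝ :=
  ∑ y ∈ Finset.univ.filter (fun y : ZMod M => ((y.val : ℕ) : ZMod N) = z), f y

lemma fhat_eq_stdAddChar (M : ℕ) [NeZero M] (f : ZMod M → ℝ) (ξ : ZMod M) :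
    fhat M f ξ = ∑ z : ZMod M, (f z : ℂ) * ZMod.stdAddChar (-(z * ξ)) := by
  unfold fhat
  refine Finset.sum_congr rfl fun z _ => ?_
  congr 1
  have h : (-(z * ξ) : ZMod M) = ((-((z.val : ℤ) * (ξ.val : ℤ)) : ℤ) : ZMod M) := by
    push_cast
    simp
  rw [h, ZMod.stdAddChar_coe]
  congr 1
  push_cast
  ring

lemma fhat_conv (M : ℕ) [NeZero M] (f g : ZMod M → ℝ) (ξ : ZMod M) :
    fhat M (conv M f g) ξ = fhat M f ξ * fhat M g ξ := by
  simp only [fhat_eq_stdAddChar, conv]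
  rw [Finset.sum_mul]
  push_cast
  simp only [Finset.sum_mul]
  rw [Finset.sum_comm]
  refine Finset.sum_congr rfl fun y _ => ?_
  rw [Finset.mul_sum, ← Equiv.sum_comp (Equiv.addRight y)]
  refine Finset.sum_congr rfl fun x _ => ?_
  have h : (-((x + y) * ξ) : ZMod M) = -(y * ξ) + -(x * ξ) := by ring
  simp only [Equiv.coe_addRight, add_sub_cancel_right]
  rw [h, AddChar.map_add_eq_mul]
  ring

lemma fhat_indicator (M : ℕ) [NeZero M] (S : Finset (ZMod M)) (ξ : ZMod M) :
    fhat M (fun x => if x ∈ S then (1 : ℝ) else 0) ξ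
      = ∑ x ∈ S, ZMod.stdAddChar (-(x * ξ)) := by
  rw [fhat_eq_stdAddChar]
  rw [← Finset.sum_subset (Finset.subset_univ S)]
  · exact Finset.sum_congr rfl fun x hx => by simp [hx]
  · intro x _ hx
    simp [hx]

lemma isUnit_of_gcd (M : ℕ) [NeZero M] {r : ZMod M} (hr : Nat.gcd r.val M = 1) : IsUnit r := by
  rw [← ZMod.natCast_zmod_val r]
  exact (ZMod.isUnit_iff_coprime _ _).2 hr

lemma gcd_one_val (M : ℕ) [NeZero M] : Nat.gcd (1 : ZMod M).val M = 1 := by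
  have h := (ZMod.isUnit_iff_coprime (1 : ZMod M).val M).1 (by simp)
  exact h

/-- Multiplication by a unit preserves the step classes. -/
lemma gcd_val_mul (M : ℕ) [NeZero M] {r : ZMod M} (hr : Nat.gcd r.val M = 1) (ξ : ZMod M) :
    Nat.gcd (r * ξ).val M = Nat.gcd ξ.val M := by
  rw [ZMod.val_mul, ← Nat.gcd_rec, Nat.gcd_comm, Nat.Coprime.gcd_mul_left_cancel _ hr]

lemma fhat_conv_image (M : ℕ) [NeZero M] (A : Finset (ZMod M)) {r : ZMod M}
    (hr : Nat.gcd r.val M = 1) (ξ : ZMod M) :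
    fhat M (conv M (fun x => if x ∈ A.image (fun a => r * a) then (1 : ℝ) else 0)
             (fun x => if x ∈ A.image (fun a => -(r * a)) then (1 : ℝ) else 0)) ξ
      = ((Complex.normSq (fhat M (fun z => if z ∈ A then (1 : ℝ) else 0) (r * ξ)) : ℝ) : ℂ) := by
  have hu := isUnit_of_gcd M hr
  rw [fhat_conv, fhat_indicator, fhat_indicator, fhat_indicator, Finset.sum_image,
    Finset.sum_image, ← Complex.mul_conj, map_sum]
  · congr 1
    · refine Finset.sum_congr rfl fun a _ => ?_
      congr 1
      ring
    · refine Finset.sum_congr rfl fun a _ => ?_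
      rw [← AddChar.map_neg_eq_conj]
      congr 1
      ring
  · intro a _ b _ h
    exact hu.mul_left_cancel (neg_injective h)
  · intro a _ b _ h
    exact hu.mul_left_cancel h

/-- The transform of `h_A` is an average of the values `|1̂_A|²` over the unit multiples of `ξ`. -/
lemma fhat_hAfun (M : ℕ) [NeZero M] (A : Finset (ZMod M)) (ξ : ZMod M) :
    fhat M (hAfun M A) ξ =
      (((1 / ((A.card : ℝ) * (Nat.totient M : ℝ))) *
        ∑ r ∈ Finset.univ.filter (fun r : ZMod M => Nat.gcd r.val M = 1),
          Complex.normSq (fhat M (fun z => if z ∈ A then (1 : ℝ) else 0) (r * ξ)) : ℝ) : ℂ) := by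
  rw [Complex.ofReal_mul, Complex.ofReal_sum,
    ← Finset.sum_congr rfl fun r hr => fhat_conv_image M A (Finset.mem_filter.1 hr).2 ξ]
  simp only [fhat, hAfun, Complex.ofReal_mul, Complex.ofReal_sum]
  rw [Finset.sum_comm, Finset.mul_sum]
  refine Finset.sum_congr rfl fun z _ => ?_
  rw [← Finset.sum_mul, mul_assoc]

/-- For nonempty `A ⊆ ℤ_M` and the averaged autocorrelation `h_A`,
for every divisor `m > 1` of `M`: `ĥ_A` vanishes on `R_{M/m}` iff `1̂_A` vanishes
on `R_{M/m}` (the mask polynomials of `h_A` and `1_A` have the same cyclotomic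
divisors `Φ_m`). -/
theorem statement11 (M : ℕ) [NeZero M] (A : Finset (ZMod M)) (hA : A.Nonempty) :
    ∀ m ∈ Nat.divisors M, 1 < m →
      ((∀ ξ : ZMod M, Nat.gcd ξ.val M = M / m → fhat M (hAfun M A) ξ = 0) ↔
        (∀ ξ : ZMod M, Nat.gcd ξ.val M = M / m →
          fhat M (fun z => if z ∈ A then (1 : ℝ) else 0) ξ = 0)) := by
  intro m _ _
  constructor
  · intro h ξ hξ
    have h0 := h ξ hξ
    have hc : (1 / ((A.card : ℝ) * (Nat.totient M : ℝ))) ≠ 0 := by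
      have h1 : 0 < A.card := hA.card_pos
      have h2 : 0 < Nat.totient M := Nat.totient_pos.2 (NeZero.pos M)
      positivity
    rw [fhat_hAfun, Complex.ofReal_eq_zero, mul_eq_zero, or_iff_right hc,
      Finset.sum_eq_zero_iff_of_nonneg fun _ _ => Complex.normSq_nonneg _] at h0
    have h1 := h0 1 (by simpa using gcd_one_val M)
    rwa [one_mul, Complex.normSq_eq_zero] at h1
  · intro h ξ hξ
    rw [fhat_hAfun, Finset.sum_eq_zero, mul_zero, Complex.ofReal_zero]
    intro r hr
    rw [h _ ((gcd_val_mul M (Finset.mem_filter.1 hr).2 ξ).trans hξ), map_zero]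
end

section
/- Let M = p^n·q^m with p ≠ q primes and n, m ≥ 1, let f : ℤ_M → ℝ be a step function, and let N = p^α with 1 ≤ α ≤ n. Define f_N : ℤ_N → ℝ by f_N(z) = ∑_{y ∈ ℤ_M, y ≡ z (mod N)} f(y). Then Φ_{p^α} divides the mask polynomial F of f (i.e., f̂(ξ) = 0 for all ξ ∈ R_{M/p^α}) if and only if f_N(0) = f_N(p^{α−1}). -/
/-!
Write `N = p ^ α` and `F = fN M f N`. For `ξ` in the step class `R_{M/N}` the exponential in
`fhat M f ξ` depends only on `z` mod `N`, so `fhat M f ξ = ∑ c : ZMod N, F c * ζ ^ c` for a primitive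
`N`-th root of unity `ζ` (`fhat_eq_sum_fN`). Since units mod `N` lift to units mod `M`, and `f` is
invariant under the latter, `F` is invariant under multiplication by units of `ZMod N`
(`fN_unit_mul`); hence `F (p ^ j * v) = F (p ^ j)` when `p ∤ v`.

Let `G` be `F` with its value at `0` replaced by `F (p ^ (α - 1))`. Then `G` is invariant under
translation by `p ^ (α - 1)` (`fN_add_pow`), while `ζ ^ p ^ (α - 1) ≠ 1`, so `∑ c, G c * ζ ^ c = 0`.
Therefore `fhat M f ξ = F 0 - F (p ^ (α - 1))` for every `ξ` in the class, and the class is nonempty.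
-/


open Finset

lemma fN_unit_mul {M : ℕ} [NeZero M] {f : ZMod M → ℝ} (hf : IsStepFun M f) {N : ℕ}
    (h : N ∣ M) (u : (ZMod N)ˣ) (c : ZMod N) : fN M f N (u * c) = fN M f N c := by
  obtain ⟨u', rfl⟩ := ZMod.unitsMap_surjective h u
  unfold fN
  symm
  refine Finset.sum_equiv (Units.mulLeft u') ?_ ?_
  · intro y
    have hu : ((ZMod.unitsMap h u' : (ZMod N)ˣ) : ZMod N) =
        ZMod.castHom h (ZMod N) (u' : ZMod M) := by
      simp [ZMod.unitsMap]
    have hc : ∀ x : ZMod M, ((x.val : ℕ) : ZMod N) = ZMod.castHom h (ZMod N) x := by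
      intro x
      rw [ZMod.castHom_apply, ZMod.natCast_val]
    simp only [mem_filter, mem_univ, true_and, Units.mulLeft_apply, hc, map_mul, ← hu]
    exact (Units.mul_right_inj _).symm
  · intro y _
    apply hf
    rw [Units.mulLeft_apply, ZMod.val_mul, ← Nat.gcd_rec, Nat.gcd_comm M,
      Nat.Coprime.gcd_mul_left_cancel _ (ZMod.val_coe_unit_coprime u')]

lemma fN_pow_mul {M : ℕ} [NeZero M] {f : ZMod M → ℝ} (hf : IsStepFun M f) {p α : ℕ}
    (hp : p.Prime) (h : p ^ α ∣ M) (j v : ℕ) (hv : ¬ p ∣ v) :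
    fN M f (p ^ α) ((p ^ j * v : ℕ) : ZMod (p ^ α)) =
      fN M f (p ^ α) ((p ^ j : ℕ) : ZMod (p ^ α)) := by
  have hco : Nat.Coprime v (p ^ α) := ((hp.coprime_iff_not_dvd.2 hv).symm).pow_right α
  rw [← fN_unit_mul hf h (ZMod.unitOfCoprime v hco) ((p ^ j : ℕ) : ZMod (p ^ α)),
    ZMod.coe_unitOfCoprime, ← Nat.cast_mul, mul_comm]

/-- Once its value at `0` is replaced by its value at `p ^ β`, the function `fN M f (p ^ (β + 1))`
is invariant under translation by `p ^ β`: this shift preserves the `p`-adic valuation of classes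
not divisible by `p ^ β`, and permutes the multiples of `p ^ β`. -/
lemma fN_add_pow {M : ℕ} [NeZero M] {f : ZMod M → ℝ} (hf : IsStepFun M f) {p β : ℕ}
    (hp : p.Prime) (h : p ^ (β + 1) ∣ M) (c : ZMod (p ^ (β + 1))) :
    (if c + (p ^ β : ℕ) = 0 then fN M f (p ^ (β + 1)) (p ^ β : ℕ)
      else fN M f (p ^ (β + 1)) (c + (p ^ β : ℕ))) =
    if c = 0 then fN M f (p ^ (β + 1)) (p ^ β : ℕ) else fN M f (p ^ (β + 1)) c := by
  have : NeZero (p ^ (β + 1)) := ⟨pow_ne_zero _ hp.ne_zero⟩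
  have key : ∀ k : ℕ, (if ((p ^ β * k : ℕ) : ZMod (p ^ (β + 1))) = 0
      then fN M f (p ^ (β + 1)) (p ^ β : ℕ)
      else fN M f (p ^ (β + 1)) (p ^ β * k : ℕ)) = fN M f (p ^ (β + 1)) (p ^ β : ℕ) := by
    intro k
    split_ifs with h0
    · rfl
    · refine fN_pow_mul hf hp h β k fun hk => h0 ?_
      rw [ZMod.natCast_eq_zero_iff, pow_succ]
      exact mul_dvd_mul_left _ hk
  obtain ⟨x, rfl⟩ := ZMod.natCast_zmod_surjective c
  by_cases hx : p ^ β ∣ x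
  · obtain ⟨k, rfl⟩ := hx
    have h1 := key (k + 1)
    rw [mul_add, mul_one, Nat.cast_add] at h1
    rw [h1, key k]
  · have hx0 : x ≠ 0 := fun h0 => hx (h0 ▸ dvd_zero _)
    obtain ⟨j, v, hv, rfl⟩ := Nat.exists_eq_pow_mul_and_not_dvd hx0 p hp.ne_one
    have hj : j < β := by
      by_contra! hj
      exact hx ((pow_dvd_pow p hj).mul_right v)
    obtain ⟨i, rfl⟩ := Nat.exists_eq_add_of_lt hj
    have hsum : p ^ j * v + p ^ (j + i + 1) = p ^ j * (v + p ^ (i + 1)) := by ring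
    have hv' : ¬ p ∣ v + p ^ (i + 1) := by
      rwa [← Nat.dvd_add_iff_left (dvd_pow_self p i.succ_ne_zero)]
    have hnz : ∀ w, ¬ p ∣ w → ((p ^ j * w : ℕ) : ZMod (p ^ (j + i + 1 + 1))) ≠ 0 := by
      intro w hw h0
      rw [ZMod.natCast_eq_zero_iff, add_assoc, add_assoc, pow_add] at h0
      exact hw ((dvd_pow_self p (by omega)).trans
        (Nat.dvd_of_mul_dvd_mul_left (pow_pos hp.pos j) h0))
    rw [← Nat.cast_add, hsum, if_neg (hnz _ hv'), if_neg (hnz _ hv), fN_pow_mul hf hp h _ _ hv',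
      fN_pow_mul hf hp h _ _ hv]

lemma fhat_eq_sum_fN {M : ℕ} [NeZero M] (f : ZMod M → ℝ) {N L : ℕ} [NeZero N]
    (hM : M = N * L) (ξ : ZMod M) (hξ : Nat.gcd ξ.val M = L) :
    ∃ ζ : ℂ, IsPrimitiveRoot ζ N ∧
      fhat M f ξ = ∑ c : ZMod N, (fN M f N c : ℂ) * ζ ^ c.val := by
  have hN0 : N ≠ 0 := NeZero.ne N
  have hL0 : L ≠ 0 := by
    rintro rfl
    exact NeZero.ne M (by simpa using hM)
  obtain ⟨k, hk⟩ : L ∣ ξ.val := hξ ▸ Nat.gcd_dvd_left _ _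
  have hco : k.Coprime N := by
    have h1 : L * Nat.gcd k N = L * 1 := by
      rw [← Nat.gcd_mul_left, ← hk, mul_comm L N, ← hM, hξ, mul_one]
    exact Nat.eq_of_mul_eq_mul_left (Nat.pos_of_ne_zero hL0) h1
  have hζ := (Complex.isPrimitiveRoot_exp_of_coprime k N hN0 hco).inv
  refine ⟨_, hζ, ?_⟩
  set ζ := (Complex.exp (2 * Real.pi * Complex.I * (k / N)))⁻¹ with hζdef
  have hterm : ∀ z : ZMod M, Complex.exp (-2 * Real.pi * Complex.I *
      ((z.val : ℂ) * (ξ.val : ℂ)) / (M : ℂ)) = ζ ^ ((z.val : ℕ) : ZMod N).val := by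
    intro z
    have hmod : ζ ^ (z.val % N) = ζ ^ z.val := (pow_eq_pow_mod _ hζ.pow_eq_one).symm
    rw [ZMod.val_natCast, hmod, hζdef, ← Complex.exp_neg, ← Complex.exp_nat_mul, hk]
    congr 1
    have hMc : (M : ℂ) = N * L := by rw [← Nat.cast_mul, ← hM]
    rw [hMc]
    have : (N : ℂ) ≠ 0 := by exact_mod_cast hN0
    have : (L : ℂ) ≠ 0 := by exact_mod_cast hL0
    push_cast
    field_simp
  unfold fhat fN
  simp only [hterm]
  rw [← Finset.sum_fiberwise Finset.univ (fun y : ZMod M => ((y.val : ℕ) : ZMod N))]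
  refine Finset.sum_congr rfl fun c _ => ?_
  rw [Complex.ofReal_sum, Finset.sum_mul]
  refine Finset.sum_congr rfl fun y hy => ?_
  rw [(Finset.mem_filter.1 hy).2]

lemma fhat_eq_sub {M : ℕ} [NeZero M] {f : ZMod M → ℝ} (hf : IsStepFun M f) {p β L : ℕ}
    (hp : p.Prime) (hM : M = p ^ (β + 1) * L) (ξ : ZMod M) (hξ : Nat.gcd ξ.val M = L) :
    fhat M f ξ = ((fN M f (p ^ (β + 1)) 0 - fN M f (p ^ (β + 1)) (p ^ β : ℕ) : ℝ) : ℂ) := by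
  have : NeZero (p ^ (β + 1)) := ⟨pow_ne_zero _ hp.ne_zero⟩
  obtain ⟨ζ, hζ, hsum⟩ := fhat_eq_sum_fN f hM ξ hξ
  have hinv := fN_add_pow hf hp (Dvd.intro L hM.symm)
  rw [hsum]
  set F := fN M f (p ^ (β + 1))
  set G : ZMod (p ^ (β + 1)) → ℝ := fun c => if c = 0 then F (p ^ β : ℕ) else F c with hG
  let χ := AddChar.zmodChar (p ^ (β + 1)) hζ.pow_eq_one
  have hχ : ∀ c : ZMod (p ^ (β + 1)), ζ ^ c.val = χ c :=
    fun c => (AddChar.zmodChar_apply hζ.pow_eq_one c).symm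
  simp only [hχ]
  have hχ1 : χ (p ^ β : ℕ) ≠ 1 := by
    rw [AddChar.zmodChar_apply']
    exact hζ.pow_ne_one_of_pos_of_lt (pow_ne_zero _ hp.ne_zero)
      (Nat.pow_lt_pow_right hp.one_lt β.lt_succ_self)
  have hS : ∑ c, (G c : ℂ) * χ c = 0 := by
    have h1 : ∑ c, (G c : ℂ) * χ c = (∑ c, (G c : ℂ) * χ c) * χ (p ^ β : ℕ) := by
      conv_lhs => rw [← Equiv.sum_comp (Equiv.addRight ((p ^ β : ℕ) : ZMod (p ^ (β + 1))))]
      rw [Finset.sum_mul]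
      refine Finset.sum_congr rfl fun c _ => ?_
      have h2 : G (c + (p ^ β : ℕ)) = G c := hinv c
      rw [Equiv.coe_addRight, h2, AddChar.map_add_eq_mul, mul_assoc]
    by_contra h0
    exact hχ1 (mul_left_cancel₀ h0 (by rw [← h1, mul_one]))
  -- `F` and `G` differ only at `0`, where `χ` takes the value `1`.
  rw [← sub_zero (∑ c, (F c : ℂ) * χ c), ← hS, ← Finset.sum_sub_distrib,
    Finset.sum_eq_single (0 : ZMod (p ^ (β + 1)))]
  · simp [hG]
  · intro c _ hc
    simp [hG, hc]
  · simp

/-- For `M = p^n q^m`, a step function `f` on `ℤ_M`, and `N = p^α`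
with `1 ≤ α ≤ n`: `Φ_{p^α}` divides the mask polynomial of `f` iff
`f_N(0) = f_N(p^{α−1})`. -/
theorem statement19 (p q n m : ℕ) (hp : p.Prime) (hq : q.Prime) (hpq : p ≠ q)
    (hn : 1 ≤ n) (hm : 1 ≤ m) (M : ℕ) [NeZero M] (hM : M = p ^ n * q ^ m)
    (f : ZMod M → ℝ) (hf : IsStepFun M f)
    (α : ℕ) (hα1 : 1 ≤ α) (hαn : α ≤ n) (N : ℕ) (hN : N = p ^ α) :
    (∀ ξ : ZMod M, Nat.gcd ξ.val M = M / p ^ α → fhat M f ξ = 0) ↔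
      fN M f N 0 = fN M f N ((p ^ (α - 1) : ℕ) : ZMod N) := by
  obtain ⟨β, rfl⟩ : ∃ β, α = β + 1 := ⟨α - 1, by omega⟩
  subst hN
  rw [Nat.add_sub_cancel]
  obtain ⟨L, hL⟩ : p ^ (β + 1) ∣ M := hM ▸ (pow_dvd_pow p hαn).mul_right _
  have hdiv : M / p ^ (β + 1) = L := by
    rw [hL, Nat.mul_div_cancel_left _ (pow_pos hp.pos _)]
  rw [hdiv]
  constructor
  · intro h
    have hL0 : 0 < L := Nat.pos_of_ne_zero fun h0 => NeZero.ne M (by simp [hL, h0])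
    have hlt : L < M := by
      rw [hL]
      exact lt_mul_of_one_lt_left hL0 (Nat.one_lt_pow β.succ_ne_zero hp.one_lt)
    have hξ : Nat.gcd (L : ZMod M).val M = L := by
      rw [ZMod.val_cast_of_lt hlt]
      exact Nat.gcd_eq_left (Dvd.intro_left _ hL.symm)
    have h1 := h _ hξ
    rw [fhat_eq_sub hf hp hL _ hξ, Complex.ofReal_eq_zero] at h1
    exact sub_eq_zero.1 h1
  · intro h ξ hξ
    rw [fhat_eq_sub hf hp hL ξ hξ, h, sub_self, Complex.ofReal_zero]
end
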